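/- Let q be a power of a prime p and let k, f be positive integers with f | k. Let χ₁ and χ₂ be the canonical additive characters of F_{q^f} and F_{q^k}, respectively. Then for every b ∈ F_{q^k}^*, Σ_{x ∈ F_{q^k}^*} χ₂(b x^{q^f - 1}) = (-1)^{k/f - 1} Σ_{ψ₁} G(ψ₁, χ₁)^{k/f} · conj(ψ₁)(b^{(q^k-1)/(q^f-1)}), where the sum on the right runs over all multiplicative characters ψ₁ of F_{q^f}^*. -/

import Mathlib

open scoped BigOperators

/-!
The Hasse–Davenport relation comes from the `L`-function of a pair of characters `ψ, χ` of a finite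
field `K`. The weight `χ(-c₁) ψ((-1)ⁿ cₙ)` of a monic polynomial `Xⁿ + c₁ Xⁿ⁻¹ + ⋯ + cₙ` is
multiplicative, and its generating series is just `1 + G(ψ, χ) X`, since for `n ≥ 2` the coefficient
`c₁` is free and independent of `cₙ`. Multiplicativity turns the identity `∑_{g ∣ f} Λ(g) = deg f`
into a formula for the logarithmic derivative of this series, which evaluates the `Λ`-weighted sums
over monic polynomials of each degree `n` as `(-1)ⁿ⁻¹ G(ψ, χ)ⁿ`. If `[L : K] = n`, such a `g` of
degree `n` is the characteristic polynomial of exactly `Λ(g)` elements of `L`, so this sum is also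
the Gauss sum of the characters `ψ ∘ N`, `χ ∘ Tr` of `L`.

As `Lˣ` is cyclic and the norm `Lˣ → Kˣ` is surjective, `x ↦ x ^ (|K| - 1)` maps onto the kernel of
the norm and is `(|K| - 1)`-to-one; hence the number of `x` above `z` is `∑_ψ ψ(N z)`, and the
exponential sum becomes a sum of lifted Gauss sums.
-/

open Polynomial Finset

section Monic

variable {K R : Type*} [Field K] [Finite K] [CommRing R]

variable (K) in
theorem finite_setOf_monic_natDegree_eq (n : ℕ) :
    {f : K[X] | f.Monic ∧ f.natDegree = n}.Finite :=
  Finite.of_equiv _ ((degreeLTEquiv K n).toEquiv.symm.trans (monicEquivDegreeLT n).symm)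

variable (K) in
/-- The monic polynomials of degree `n` over a finite field. -/
noncomputable def monicsOfDegree (n : ℕ) : Finset K[X] :=
  (finite_setOf_monic_natDegree_eq K n).toFinset

theorem mem_monicsOfDegree {n : ℕ} {f : K[X]} :
    f ∈ monicsOfDegree K n ↔ f.Monic ∧ f.natDegree = n := by
  simp [monicsOfDegree]

open scoped Classical in
/-- The monic divisors of a nonzero polynomial over a finite field. -/
noncomputable def monicDivisors (f : K[X]) : Finset K[X] :=
  ((range (f.natDegree + 1)).biUnion (monicsOfDegree K)).filter (· ∣ f)

theorem mem_monicDivisors {f g : K[X]} (hf : f ≠ 0) :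
    g ∈ monicDivisors f ↔ g.Monic ∧ g ∣ f := by
  simp only [monicDivisors, mem_filter, mem_biUnion, mem_range, mem_monicsOfDegree]
  exact ⟨fun ⟨⟨_, _, hg, _⟩, hdvd⟩ => ⟨hg, hdvd⟩, fun ⟨hg, hdvd⟩ =>
    ⟨⟨_, Nat.lt_succ_of_le (natDegree_le_of_dvd hdvd hf), hg, rfl⟩, hdvd⟩⟩

/-- The power series `∑ w(f) X ^ deg f` over monic polynomials `f`, the analogue for `K[X]` of the
Dirichlet series with coefficients `w`. -/
noncomputable def monicSeries (w : K[X] → R) : PowerSeries R :=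
  PowerSeries.mk fun n => ∑ f ∈ monicsOfDegree K n, w f

theorem coeff_monicSeries (w : K[X] → R) (n : ℕ) :
    (monicSeries w).coeff n = ∑ f ∈ monicsOfDegree K n, w f :=
  PowerSeries.coeff_mk _ _

theorem monicSeries_natDegree_mul (w : K[X] → R) :
    monicSeries (fun f => (f.natDegree : R) * w f) =
      PowerSeries.X * PowerSeries.derivative R (monicSeries w) := by
  ext n
  have hdeg : (monicSeries fun f => (f.natDegree : R) * w f).coeff n =
      n * (monicSeries w).coeff n := by
    rw [coeff_monicSeries, coeff_monicSeries, mul_sum]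
    exact sum_congr rfl fun f hf => by rw [(mem_monicsOfDegree.mp hf).2]
  rw [hdeg]
  cases n with
  | zero => simp
  | succ n =>
    rw [PowerSeries.coeff_succ_X_mul, PowerSeries.coeff_derivative]
    push_cast; ring

theorem sum_antidiagonal_monicsOfDegree {M : Type*} [AddCommMonoid M] (F : K[X] → K[X] → M)
    (n : ℕ) :
    ∑ ij ∈ antidiagonal n, ∑ g ∈ monicsOfDegree K ij.1, ∑ h ∈ monicsOfDegree K ij.2, F g h =
      ∑ f ∈ monicsOfDegree K n, ∑ g ∈ monicDivisors f, F g (f / g) := by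
  simp_rw [← sum_product' (s := monicsOfDegree K _)]
  rw [sum_sigma', sum_sigma']
  refine sum_bij' (fun x _ => ⟨x.2.1 * x.2.2, x.2.1⟩)
    (fun y _ => ⟨(y.2.natDegree, (y.1 / y.2).natDegree), (y.2, y.1 / y.2)⟩) ?_ ?_ ?_ ?_ ?_
  case refine_2 | refine_4 =>
    rintro ⟨f, g⟩ hy
    simp only [mem_sigma, mem_monicsOfDegree] at hy
    obtain ⟨⟨hf, rfl⟩, hy⟩ := hy
    obtain ⟨hg, h, rfl⟩ := (mem_monicDivisors hf.ne_zero).mp hy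
    have hh := hg.of_mul_monic_left hf
    simp [mul_div_cancel_left₀ _ hg.ne_zero, mem_monicsOfDegree, hg, hh, hg.natDegree_mul hh]
  all_goals
    rintro ⟨⟨i, j⟩, g, h⟩ hx
    simp only [mem_sigma, mem_product, HasAntidiagonal.mem_antidiagonal, mem_monicsOfDegree] at hx
    obtain ⟨rfl, ⟨hg, rfl⟩, hh, rfl⟩ := hx
    have hgh := hg.mul hh
    simp [mul_div_cancel_left₀ _ hg.ne_zero, mem_monicsOfDegree, mem_monicDivisors hgh.ne_zero,
      hg, hgh, hg.natDegree_mul hh]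

theorem monicSeries_mul (u : K[X] → R) {w : K[X] → R}
    (hw : ∀ f g : K[X], f.Monic → g.Monic → w (f * g) = w f * w g) :
    monicSeries (fun f => u f * w f) * monicSeries w =
      monicSeries fun f => (∑ g ∈ monicDivisors f, u g) * w f := by
  ext n
  simp_rw [PowerSeries.coeff_mul, coeff_monicSeries, sum_mul_sum,
    sum_antidiagonal_monicsOfDegree (fun g h => u g * w g * w h), sum_mul]
  refine sum_congr rfl fun f hf => sum_congr rfl fun g hg => ?_
  obtain ⟨hf, -⟩ := mem_monicsOfDegree.mp hf
  obtain ⟨hg_monic, h, rfl⟩ := (mem_monicDivisors hf.ne_zero).mp hg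
  rw [mul_div_cancel_left₀ _ hg_monic.ne_zero, mul_assoc,
    hw g h hg_monic (hg_monic.of_mul_monic_left hf)]

end Monic

section Mangoldt

open UniqueFactorizationMonoid

variable {K R : Type*} [Field K]

open scoped Classical in
/-- The von Mangoldt function of `K[X]`: `deg P` at (associates of) a power `P ^ j` of an
irreducible polynomial, `j ≥ 1`, and `0` elsewhere. -/
noncomputable def polyMangoldt (f : K[X]) : ℕ :=
  if IsPrimePow f then (radical f).natDegree else 0

open scoped Classical in
theorem radical_pow_of_monic_of_irreducible {P : K[X]} (hP : Irreducible P) (hm : P.Monic) {j : ℕ}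
    (hj : j ≠ 0) : radical (P ^ j) = P := by
  rw [radical_pow_of_prime hP.prime hj, hm.normalize_eq_self]

theorem polyMangoldt_pow {P : K[X]} (hP : Irreducible P) (hm : P.Monic) {j : ℕ} (hj : j ≠ 0) :
    polyMangoldt (P ^ j) = P.natDegree := by
  classical
  rw [polyMangoldt, if_pos (hP.prime.isPrimePow.pow hj),
    radical_pow_of_monic_of_irreducible hP hm hj]

theorem exists_monic_irreducible_pow_of_isPrimePow {g : K[X]} (hg : g.Monic) (hpow : IsPrimePow g) :
    ∃ P : K[X], Irreducible P ∧ P.Monic ∧ ∃ j ≠ 0, g = P ^ j := by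
  classical
  obtain ⟨p, j, hp, hj, rfl⟩ := hpow
  refine ⟨normalize p, (associated_normalize p).irreducible_iff.mp hp.irreducible,
    monic_normalize hp.ne_zero, j, hj.ne', ?_⟩
  rw [← hg.normalize_eq_self]
  exact map_pow normalizeHom p j

open scoped Classical in
theorem natDegree_eq_sum_primeFactors {f : K[X]} (hf : f.Monic) :
    f.natDegree = ∑ P ∈ primeFactors f, (normalizedFactors f).count P * P.natDegree := by
  have hmonic : ∀ P ∈ normalizedFactors f, P.Monic := fun P hP =>
    ((Polynomial.mem_normalizedFactors_iff hf.ne_zero).mp hP).2.1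
  conv_lhs => rw [← hf.normalize_eq_self, ← prod_normalizedFactors_eq hf.ne_zero,
    natDegree_multiset_prod_of_monic _ hmonic, sum_multiset_map_count,
    toFinset_normalizedFactors]
  rfl

open scoped Classical in
theorem pow_dvd_iff_le_count_normalizedFactors {f P : K[X]} (hf : f ≠ 0) (hP : Irreducible P)
    (hm : P.Monic) {j : ℕ} : P ^ j ∣ f ↔ j ≤ (normalizedFactors f).count P := by
  rw [pow_dvd_iff_le_emultiplicity, emultiplicity_eq_count_normalizedFactors hP hf,
    hm.normalize_eq_self, Nat.cast_le]

open scoped Classical in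
theorem filter_radical_monicDivisors [Finite K] {f P : K[X]} (hf : f ≠ 0) (hP : Irreducible P)
    (hm : P.Monic) :
    {g ∈ monicDivisors f | IsPrimePow g ∧ radical g = P} =
      (Icc 1 ((normalizedFactors f).count P)).image (P ^ ·) := by
  ext g
  simp only [mem_filter, mem_monicDivisors hf, mem_image, mem_Icc]
  constructor
  · rintro ⟨⟨hg, hdvd⟩, hpow, rfl⟩
    obtain ⟨Q, hQ, hQm, j, hj, rfl⟩ := exists_monic_irreducible_pow_of_isPrimePow hg hpow
    rw [radical_pow_of_monic_of_irreducible hQ hQm hj]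
    exact ⟨j, ⟨Nat.one_le_iff_ne_zero.mpr hj,
      (pow_dvd_iff_le_count_normalizedFactors hf hQ hQm).mp hdvd⟩, rfl⟩
  · rintro ⟨j, ⟨hj, hle⟩, rfl⟩
    have hj : j ≠ 0 := Nat.one_le_iff_ne_zero.mp hj
    exact ⟨⟨hm.pow j, (pow_dvd_iff_le_count_normalizedFactors hf hP hm).mpr hle⟩,
      hP.prime.isPrimePow.pow hj, radical_pow_of_monic_of_irreducible hP hm hj⟩

theorem sum_polyMangoldt_monicDivisors [Finite K] {f : K[X]} (hf : f.Monic) :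
    ∑ g ∈ monicDivisors f, polyMangoldt g = f.natDegree := by
  classical
  have hmaps : ∀ g ∈ (monicDivisors f).filter IsPrimePow, radical g ∈ primeFactors f := by
    intro g hg
    obtain ⟨hg, hpow⟩ := mem_filter.mp hg
    obtain ⟨hg, hdvd⟩ := (mem_monicDivisors hf.ne_zero).mp hg
    obtain ⟨P, hP, hm, j, hj, rfl⟩ := exists_monic_irreducible_pow_of_isPrimePow hg hpow
    rw [radical_pow_of_monic_of_irreducible hP hm hj, mem_primeFactors,
      Polynomial.mem_normalizedFactors_iff hf.ne_zero]
    exact ⟨hP, hm, (dvd_pow_self P hj).trans hdvd⟩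
  simp only [polyMangoldt, ← sum_filter]
  rw [← sum_fiberwise_of_maps_to hmaps, natDegree_eq_sum_primeFactors hf]
  refine sum_congr rfl fun P hP => ?_
  rw [mem_primeFactors, Polynomial.mem_normalizedFactors_iff hf.ne_zero] at hP
  obtain ⟨hirr, hm, -⟩ := hP
  rw [sum_congr rfl fun g hg => congrArg natDegree (mem_filter.mp hg).2, sum_const, smul_eq_mul,
    filter_filter, filter_radical_monicDivisors hf.ne_zero hirr hm,
    card_image_of_injective _ (pow_injective_of_not_isUnit hirr.not_isUnit hirr.ne_zero),
    Nat.card_Icc, Nat.add_sub_cancel]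

theorem monicSeries_polyMangoldt_mul [Finite K] [CommRing R] {w : K[X] → R}
    (hw : ∀ f g : K[X], f.Monic → g.Monic → w (f * g) = w f * w g) :
    monicSeries (fun f => (polyMangoldt f : R) * w f) * monicSeries w =
      PowerSeries.X * PowerSeries.derivative R (monicSeries w) := by
  rw [monicSeries_mul _ hw, ← monicSeries_natDegree_mul]
  ext n
  simp_rw [coeff_monicSeries]
  refine sum_congr rfl fun f hf => ?_
  rw [← sum_polyMangoldt_monicDivisors (mem_monicsOfDegree.mp hf).1, Nat.cast_sum]

end Mangoldt

section CharWeight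

variable {K R : Type*} [CommRing K] [CommRing R]

/-- The weight `χ(-c₁) ψ((-1)ⁿ cₙ)` of a monic polynomial `Xⁿ + c₁ Xⁿ⁻¹ + ⋯ + cₙ`: the value of the
characters at the sum and the product of its roots. -/
noncomputable def charWeight (ψ : MulChar K R) (χ : AddChar K R) (f : K[X]) : R :=
  χ (-f.nextCoeff) * ψ ((-1) ^ f.natDegree * f.coeff 0)

theorem charWeight_mul (ψ : MulChar K R) (χ : AddChar K R) {f g : K[X]}
    (hf : f.Monic) (hg : g.Monic) :
    charWeight ψ χ (f * g) = charWeight ψ χ f * charWeight ψ χ g := by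
  have hconst : (-1) ^ (f * g).natDegree * (f * g).coeff 0 =
      (-1) ^ f.natDegree * f.coeff 0 * ((-1) ^ g.natDegree * g.coeff 0) := by
    rw [hf.natDegree_mul hg, mul_coeff_zero, pow_add, mul_mul_mul_comm]
  rw [charWeight, hf.nextCoeff_mul hg, neg_add, AddChar.map_add_eq_mul, hconst, map_mul,
    mul_mul_mul_comm]
  rfl

theorem charWeight_one (ψ : MulChar K R) (χ : AddChar K R) : charWeight ψ χ 1 = 1 := by
  simp [charWeight, nextCoeff]

theorem charWeight_X_sub_C [Nontrivial K] (ψ : MulChar K R) (χ : AddChar K R) (a : K) :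
    charWeight ψ χ (X - C a) = ψ a * χ a := by
  simp [charWeight, mul_comm]

theorem charWeight_add_C_mul_X_pow (ψ : MulChar K R) (χ : AddChar K R) (t : K) {f : K[X]}
    (hf : 2 ≤ f.natDegree) :
    charWeight ψ χ (f + C t * X ^ (f.natDegree - 1)) = χ (-t) * charWeight ψ χ f := by
  have hpos : f.natDegree - 1 ≠ 0 := by lia
  have hdeg : (f + C t * X ^ (f.natDegree - 1)).natDegree = f.natDegree :=
    natDegree_add_eq_left_of_natDegree_lt ((natDegree_C_mul_X_pow_le _ _).trans_lt (by lia))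
  have hnext : (f + C t * X ^ (f.natDegree - 1)).nextCoeff = f.nextCoeff + t := by
    rw [nextCoeff_of_natDegree_pos (by lia), nextCoeff_of_natDegree_pos (by lia), hdeg]
    simp
  rw [charWeight, hnext, hdeg, neg_add_rev, AddChar.map_add_eq_mul, mul_assoc, charWeight]
  simp [coeff_X_pow, hpos.symm]

end CharWeight

section CharWeightSeries

variable {K R : Type*} [Field K] [CommRing R] {χ : AddChar K R}

theorem add_C_mul_X_pow_mem_monicsOfDegree [Finite K] (t : K) {n : ℕ} (hn : n ≠ 0) {f : K[X]}
    (hf : f ∈ monicsOfDegree K n) : f + C t * X ^ (n - 1) ∈ monicsOfDegree K n := by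
  obtain ⟨hmonic, rfl⟩ := mem_monicsOfDegree.mp hf
  have hdeg : (C t * X ^ (f.natDegree - 1)).degree < f.degree := by
    rw [degree_eq_natDegree hmonic.ne_zero]
    exact (degree_C_mul_X_pow_le _ _).trans_lt (Nat.cast_lt.mpr (Nat.pred_lt hn))
  exact mem_monicsOfDegree.mpr
    ⟨hmonic.add_of_left hdeg, natDegree_add_eq_left_of_degree_lt hdeg⟩

theorem sum_charWeight_eq_zero [Finite K] [IsDomain R] (ψ : MulChar K R) (hχ : χ ≠ 1)
    {n : ℕ} (hn : 2 ≤ n) : ∑ f ∈ monicsOfDegree K n, charWeight ψ χ f = 0 := by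
  obtain ⟨t, ht⟩ := AddChar.ne_one_iff.mp hχ
  have hmem (s : K) {f : K[X]} (hf : f ∈ monicsOfDegree K n) :=
    add_C_mul_X_pow_mem_monicsOfDegree s (by lia : n ≠ 0) hf
  refine eq_zero_of_mul_eq_self_left ht ?_
  rw [mul_sum]
  refine sum_bij' (fun f _ => f + C (-t) * X ^ (n - 1)) (fun f _ => f + C t * X ^ (n - 1))
    (fun f hf => hmem (-t) hf) (fun f hf => hmem t hf) (by simp) (by simp) fun f hf => ?_
  obtain ⟨-, rfl⟩ := mem_monicsOfDegree.mp hf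
  rw [charWeight_add_C_mul_X_pow ψ χ (-t) hn, neg_neg]

theorem monicsOfDegree_zero [Finite K] : monicsOfDegree K 0 = {1} := by
  ext f
  rw [mem_monicsOfDegree, mem_singleton]
  exact ⟨fun ⟨hf, h⟩ => hf.natDegree_eq_zero.mp h, by rintro rfl; simp⟩

theorem sum_charWeight_monicsOfDegree_one [Fintype K] (ψ : MulChar K R) (χ : AddChar K R) :
    ∑ f ∈ monicsOfDegree K 1, charWeight ψ χ f = gaussSum ψ χ := by
  refine (sum_bij (fun a _ => X - C a) (fun a _ => ?_) (fun a _ b _ h => by simpa using h)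
    (fun f hf => ?_) (fun a _ => (charWeight_X_sub_C ψ χ a).symm)).symm
  · exact mem_monicsOfDegree.mpr ⟨monic_X_sub_C a, natDegree_X_sub_C a⟩
  · obtain ⟨hf, hdeg⟩ := mem_monicsOfDegree.mp hf
    exact ⟨-f.coeff 0, mem_univ _, by rw [C_neg, sub_neg_eq_add, ← hf.eq_X_add_C hdeg]⟩

theorem monicSeries_charWeight [Fintype K] [IsDomain R] (ψ : MulChar K R) (hχ : χ ≠ 1) :
    monicSeries (charWeight ψ χ) = 1 + PowerSeries.C (gaussSum ψ χ) * PowerSeries.X := by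
  ext n
  rw [coeff_monicSeries]
  match n with
  | 0 => simp [monicsOfDegree_zero, charWeight_one]
  | 1 => simp [sum_charWeight_monicsOfDegree_one, PowerSeries.coeff_one]
  | n + 2 => simp [sum_charWeight_eq_zero ψ hχ, PowerSeries.coeff_one]

theorem coeff_of_mul_one_add_C_mul_X_eq {T : PowerSeries R} {g : R}
    (hT : T * (1 + PowerSeries.C g * PowerSeries.X) = PowerSeries.C g * PowerSeries.X) (n : ℕ) :
    T.coeff (n + 1) = (-1) ^ n * g ^ (n + 1) := by
  rw [mul_add, mul_one, ← mul_assoc] at hT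
  have hzero : T.coeff 0 = 0 := by simpa using congrArg (PowerSeries.coeff 0) hT
  have hsucc (m : ℕ) : T.coeff (m + 1) + T.coeff m * g = if m = 0 then g else 0 := by
    simpa [PowerSeries.coeff_succ_mul_X, PowerSeries.coeff_C] using
      congrArg (PowerSeries.coeff (m + 1)) hT
  induction n with
  | zero => simpa [hzero] using hsucc 0
  | succ n ih =>
    have hn : T.coeff (n + 2) + T.coeff (n + 1) * g = 0 := hsucc (n + 1)
    rw [eq_neg_of_add_eq_zero_left hn, ih]
    ring

theorem sum_polyMangoldt_mul_charWeight [Fintype K] [IsDomain R] (ψ : MulChar K R) (hχ : χ ≠ 1)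
    (n : ℕ) :
    ∑ f ∈ monicsOfDegree K (n + 1), (polyMangoldt f : R) * charWeight ψ χ f =
      (-1) ^ n * gaussSum ψ χ ^ (n + 1) := by
  rw [← coeff_monicSeries fun f => (polyMangoldt f : R) * charWeight ψ χ f]
  refine coeff_of_mul_one_add_C_mul_X_eq ?_ n
  rw [← monicSeries_charWeight ψ hχ,
    monicSeries_polyMangoldt_mul fun f g hf hg => charWeight_mul ψ χ hf hg,
    monicSeries_charWeight ψ hχ]
  simp [mul_comm]

end CharWeightSeries

section FieldCharpoly

variable {K L : Type*} [Field K] [Field L] [Algebra K L]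

variable (K) in
/-- The characteristic polynomial over `K` of (multiplication by) an element `x` of `L`, in the form
`(minimal polynomial) ^ [L : K(x)]`. -/
noncomputable def fieldCharpoly (x : L) : K[X] :=
  minpoly K x ^ Module.finrank (IntermediateField.adjoin K {x}) L

section FiniteDimensional

variable [FiniteDimensional K L]

theorem monic_fieldCharpoly (x : L) : (fieldCharpoly K x).Monic :=
  (minpoly.monic (.of_finite K x)).pow _

theorem natDegree_fieldCharpoly (x : L) :
    (fieldCharpoly K x).natDegree = Module.finrank K L := by
  have hx : IsIntegral K x := .of_finite K x
  rw [fieldCharpoly, (minpoly.monic hx).natDegree_pow, mul_comm,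
    ← IntermediateField.adjoin.finrank hx, Module.finrank_mul_finrank]

theorem neg_nextCoeff_fieldCharpoly (x : L) :
    -(fieldCharpoly K x).nextCoeff = Algebra.trace K L x := by
  have hx : IsIntegral K x := .of_finite K x
  rw [trace_eq_trace_adjoin, trace_adjoinSimpleGen hx, fieldCharpoly,
    (minpoly.monic hx).nextCoeff_pow, smul_neg]

theorem neg_one_pow_mul_coeff_zero_fieldCharpoly (x : L) :
    (-1) ^ (fieldCharpoly K x).natDegree * (fieldCharpoly K x).coeff 0 = Algebra.norm K x := by
  have hx : IsIntegral K x := .of_finite K x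
  have hgen : Algebra.norm K (IntermediateField.AdjoinSimple.gen K x) =
      (-1) ^ (minpoly K x).natDegree * (minpoly K x).coeff 0 := by
    simpa [IntermediateField.minpoly_gen] using
      Algebra.PowerBasis.norm_gen_eq_coeff_zero_minpoly (IntermediateField.adjoin.powerBasis hx)
  rw [Algebra.norm_eq_norm_adjoin, hgen, fieldCharpoly, (minpoly.monic hx).natDegree_pow,
    coeff_zero_eq_eval_zero, eval_pow, ← coeff_zero_eq_eval_zero, mul_pow, ← pow_mul,
    mul_comm (Module.finrank _ _)]

theorem charWeight_fieldCharpoly {R : Type*} [CommRing R] (ψ : MulChar K R) (χ : AddChar K R)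
    (x : L) :
    charWeight ψ χ (fieldCharpoly K x) = χ (Algebra.trace K L x) * ψ (Algebra.norm K x) := by
  rw [charWeight, neg_nextCoeff_fieldCharpoly, neg_one_pow_mul_coeff_zero_fieldCharpoly]

theorem fieldCharpoly_eq_pow_iff {P : K[X]} (hP : Irreducible P) (hm : P.Monic) {j : ℕ}
    (hj : P.natDegree * j = Module.finrank K L) {x : L} :
    fieldCharpoly K x = P ^ j ↔ aeval x P = 0 := by
  have hx : IsIntegral K x := .of_finite K x
  constructor
  · intro h
    have hdvd : minpoly K x ∣ P := by
      refine (minpoly.prime hx).dvd_of_dvd_pow (n := j) ?_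
      rw [← h]
      exact dvd_pow_self _ Module.finrank_pos.ne'
    exact aeval_eq_zero_of_dvd_aeval_eq_zero hdvd (minpoly.aeval K x)
  · intro h
    have hmin : minpoly K x = P := (minpoly.eq_of_irreducible_of_monic hP h hm).symm
    have hdeg : P.natDegree * Module.finrank (IntermediateField.adjoin K {x}) L =
        P.natDegree * j := by
      rw [hj, ← hmin, ← IntermediateField.adjoin.finrank hx, Module.finrank_mul_finrank]
    rw [fieldCharpoly, hmin, Nat.eq_of_mul_eq_mul_left hP.natDegree_pos hdeg]

theorem splits_map_algebraMap_of_natDegree_dvd_finrank [Finite K] {P : K[X]}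
    (hP : Irreducible P) (hdvd : P.natDegree ∣ Module.finrank K L) :
    (P.map (algebraMap K L)).Splits := by
  have := Fintype.ofFinite K
  have := Module.finite_of_finite K (M := L)
  have := Fintype.ofFinite L
  have hdvd : P ∣ X ^ Nat.card K ^ Module.finrank K L - X :=
    hP.natDegree_dvd_iff_dvd_X_pow_card_pow_sub_X.mp hdvd
  rw [Nat.card_eq_fintype_card, ← Module.card_eq_pow_finrank] at hdvd
  exact (FiniteField.isSplittingField_sub L K).splits.of_dvd
    (map_ne_zero (FiniteField.X_pow_card_sub_X_ne_zero K Fintype.one_lt_card))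
    (map_dvd (algebraMap K L) hdvd)

end FiniteDimensional

variable [Finite K] [Fintype L]

open scoped Classical in
theorem card_fieldCharpoly_eq_pow {P : K[X]} (hP : Irreducible P) (hm : P.Monic) {j : ℕ}
    (hj : P.natDegree * j = Module.finrank K L) :
    #{x : L | fieldCharpoly K x = P ^ j} = P.natDegree := by
  have hroots : ({x : L | fieldCharpoly K x = P ^ j} : Finset L) = (P.aroots L).toFinset := by
    ext x
    simp [fieldCharpoly_eq_pow_iff hP hm hj, hP.ne_zero]
  have hsplits := splits_map_algebraMap_of_natDegree_dvd_finrank hP ⟨j, hj.symm⟩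
  have hnodup : (P.aroots L).Nodup :=
    (nodup_aroots_iff_of_splits hP.ne_zero hsplits).mpr (PerfectField.separable_of_irreducible hP)
  rw [hroots, Multiset.toFinset_card_of_nodup hnodup, aroots, ← hsplits.natDegree_eq_card_roots,
    natDegree_map]

open scoped Classical in
theorem card_fieldCharpoly_eq {g : K[X]} (hg : g ∈ monicsOfDegree K (Module.finrank K L)) :
    #{x : L | fieldCharpoly K x = g} = polyMangoldt g := by
  obtain ⟨hmonic, hdeg⟩ := mem_monicsOfDegree.mp hg
  by_cases hpow : IsPrimePow g
  · obtain ⟨P, hP, hm, j, hj, rfl⟩ := exists_monic_irreducible_pow_of_isPrimePow hmonic hpow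
    rw [hm.natDegree_pow, mul_comm] at hdeg
    rw [card_fieldCharpoly_eq_pow hP hm hdeg, polyMangoldt_pow hP hm hj]
  · rw [polyMangoldt, if_neg hpow, card_eq_zero, filter_eq_empty_iff]
    rintro x - rfl
    exact hpow ((minpoly.prime (.of_finite K x)).isPrimePow.pow Module.finrank_pos.ne')

end FieldCharpoly

section HasseDavenport

variable {K R : Type*} (L : Type*) [Field K] [Field L] [Algebra K L] [CommRing R]

/-- The lift `ψ ∘ N` to `L` of a multiplicative character `ψ` of `K`. -/
noncomputable def normLift [FiniteDimensional K L] (ψ : MulChar K R) : MulChar L R where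
  toMonoidHom := ψ.toMonoidHom.comp (Algebra.norm K)
  map_nonunit' x hx := by
    obtain rfl : x = 0 := by simpa using hx
    simp [MulChar.map_zero]

/-- The lift `χ ∘ Tr` to `L` of an additive character `χ` of `K`. -/
noncomputable def traceLift (χ : AddChar K R) : AddChar L R :=
  χ.compAddMonoidHom (Algebra.trace K L).toAddMonoidHom

variable {L}

theorem normLift_apply [FiniteDimensional K L] (ψ : MulChar K R) (x : L) :
    normLift L ψ x = ψ (Algebra.norm K x) :=
  rfl

theorem inv_normLift [FiniteDimensional K L] (ψ : MulChar K R) :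
    (normLift L ψ)⁻¹ = normLift L ψ⁻¹ := by
  refine inv_eq_of_mul_eq_one_right (MulChar.ext fun u => ?_)
  rw [MulChar.mul_apply, normLift_apply, normLift_apply, ← MulChar.mul_apply, mul_inv_cancel,
    MulChar.one_apply (u.isUnit.map (Algebra.norm K)), MulChar.one_apply_coe]

theorem traceLift_apply (χ : AddChar K R) (x : L) :
    traceLift L χ x = χ (Algebra.trace K L x) :=
  rfl

theorem gaussSum_normLift_traceLift [Fintype K] [Fintype L] [IsDomain R] (ψ : MulChar K R)
    {χ : AddChar K R} (hχ : χ ≠ 1) :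
    gaussSum (normLift L ψ) (traceLift L χ) =
      (-1) ^ (Module.finrank K L - 1) * gaussSum ψ χ ^ Module.finrank K L := by
  classical
  have hmem (x : L) : fieldCharpoly K x ∈ monicsOfDegree K (Module.finrank K L) :=
    mem_monicsOfDegree.mpr ⟨monic_fieldCharpoly x, natDegree_fieldCharpoly x⟩
  calc gaussSum (normLift L ψ) (traceLift L χ)
      = ∑ x : L, charWeight ψ χ (fieldCharpoly K x) := by
        refine sum_congr rfl fun x _ => ?_
        rw [normLift_apply, traceLift_apply, charWeight_fieldCharpoly, mul_comm]
    _ = ∑ g ∈ monicsOfDegree K (Module.finrank K L), (polyMangoldt g : R) * charWeight ψ χ g := by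
        rw [← sum_fiberwise_of_maps_to fun x _ => hmem x]
        refine sum_congr rfl fun g hg => ?_
        rw [← card_fieldCharpoly_eq hg, ← nsmul_eq_mul, ← sum_const]
        exact sum_congr rfl fun x hx => by rw [(mem_filter.mp hx).2]
    _ = _ := by
        obtain ⟨n, hn⟩ := Nat.exists_eq_add_one.mpr (Module.finrank_pos : 0 < Module.finrank K L)
        rw [hn, sum_polyMangoldt_mul_charWeight ψ hχ, Nat.add_sub_cancel]

end HasseDavenport

section PowerMap

theorem sum_mulChar_apply {M R : Type*} [CommMonoid M] [Finite M] [CommRing R] [IsDomain R]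
    [HasEnoughRootsOfUnity R (Monoid.exponent Mˣ)] [Fintype (MulChar M R)] [DecidableEq M] (a : M) :
    ∑ ψ : MulChar M R, ψ a = if a = 1 then (Nat.card Mˣ : R) else 0 := by
  split_ifs with ha
  · subst ha
    simp [← Nat.card_eq_fintype_card, MulChar.card_eq_card_units_of_hasEnoughRootsOfUnity M R]
  · obtain ⟨ψ, hψ⟩ := MulChar.exists_apply_ne_one_of_hasEnoughRootsOfUnity M R ha
    refine eq_zero_of_mul_eq_self_left hψ ?_
    simp only [mul_sum, ← MulChar.mul_apply]
    exact Fintype.sum_bijective _ (Group.mulLeft_bijective ψ) _ _ fun _ => rfl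

variable {G H : Type*} [CommGroup G] [IsCyclic G] [Group H] {N : G →* H}

theorem card_ker_powMonoidHom_card [Finite G] (hN : Function.Surjective N) :
    Nat.card (powMonoidHom (Nat.card H) : G →* G).ker = Nat.card H := by
  rw [IsCyclic.card_powMonoidHom_ker, Nat.gcd_eq_right (Subgroup.card_dvd_of_surjective N hN)]

theorem range_powMonoidHom_card_eq_ker [Finite G] (hN : Function.Surjective N) :
    (powMonoidHom (Nat.card H) : G →* G).range = N.ker := by
  have : Finite H := .of_surjective N hN
  have hle : (powMonoidHom (Nat.card H)).range ≤ N.ker := by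
    rintro _ ⟨x, rfl⟩
    rw [MonoidHom.mem_ker, powMonoidHom_apply, map_pow, pow_card_eq_one']
  have hrange : Nat.card (powMonoidHom (Nat.card H) : G →* G).range = Nat.card G / Nat.card H := by
    rw [IsCyclic.card_powMonoidHom_range,
      Nat.gcd_eq_right (Subgroup.card_dvd_of_surjective N hN)]
  have hker : Nat.card N.ker * Nat.card H = Nat.card G := by
    rw [← Subgroup.card_mul_index N.ker, Subgroup.index_ker, MonoidHom.range_eq_top.mpr hN,
      Subgroup.card_top]
  exact Subgroup.eq_of_le_of_card_ge hle
    (hrange.trans (Nat.div_eq_of_eq_mul_left Nat.card_pos hker.symm)).ge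

theorem card_pow_card_eq [Fintype G] [DecidableEq G] [DecidableEq H] (hN : Function.Surjective N)
    (z : G) : #{x : G | x ^ Nat.card H = z} = if N z = 1 then Nat.card H else 0 := by
  have hz : N z = 1 ↔ z ∈ (powMonoidHom (Nat.card H) : G →* G).range := by
    rw [range_powMonoidHom_card_eq_ker hN, MonoidHom.mem_ker]
  simp only [hz]
  split_ifs with hz
  · obtain ⟨x, rfl⟩ := hz
    have hfiber := Nat.card_congr (MonoidHom.fiberEquivKer (powMonoidHom (Nat.card H)) x)
    rw [card_ker_powMonoidHom_card hN] at hfiber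
    exact (Nat.subtype_card _ (by simp)).symm.trans hfiber
  · rw [card_eq_zero, filter_eq_empty_iff]
    exact fun x _ hx => hz ⟨x, hx⟩

end PowerMap

theorem sum_units_mulChar_mul_addChar {A R : Type*} [CommRing A] [Fintype A] [Fintype Aˣ]
    [CommRing R] (ψ : MulChar A R) (χ : AddChar A R) :
    ∑ u : Aˣ, ψ u * χ u = gaussSum ψ χ :=
  Fintype.sum_of_injective _ Units.val_injective _ _
    (fun a ha => by rw [ψ.map_nonunit ha, zero_mul]) fun _ => rfl

section Main

variable {K L R : Type*} [Field K] [Field L] [Algebra K L] [Fintype K] [Fintype L]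
  [CommRing R] [IsDomain R]

theorem card_units_pow_eq_sum_mulChar [DecidableEq L] [Fintype (MulChar K R)]
    [HasEnoughRootsOfUnity R (Monoid.exponent Kˣ)] (z : Lˣ) :
    (#{x : Lˣ | x ^ (Fintype.card K - 1) = z} : R) =
      ∑ ψ : MulChar K R, normLift L ψ z := by
  classical
  have hcard : Fintype.card K - 1 = Nat.card Kˣ := by
    rw [Nat.card_eq_fintype_card, Fintype.card_units]
  have hone : Units.map (Algebra.norm K) z = 1 ↔ Algebra.norm K (z : L) = 1 := Units.ext_iff
  simp only [normLift_apply, sum_mulChar_apply, hcard,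
    card_pow_card_eq (FiniteField.unitsMap_norm_surjective K L), hone, Nat.cast_ite, Nat.cast_zero]

theorem stmt2_general [DecidableEq L] [HasEnoughRootsOfUnity R (Monoid.exponent Kˣ)]
    {χ : AddChar K R} (hχ : χ ≠ 1) {b : L} (hb : b ≠ 0) :
    ∑ x : Lˣ, χ (Algebra.trace K L (b * (x : L) ^ (Fintype.card K - 1))) =
      (-1) ^ (Module.finrank K L - 1) *
        ∑ᶠ ψ : MulChar K R, gaussSum ψ χ ^ Module.finrank K L * ψ⁻¹ (Algebra.norm K b) := by
  have := Fintype.ofFinite (MulChar K R)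
  calc ∑ x : Lˣ, χ (Algebra.trace K L (b * (x : L) ^ (Fintype.card K - 1)))
      = ∑ z : Lˣ, #{x : Lˣ | x ^ (Fintype.card K - 1) = z} * traceLift L χ (b * z) := by
        rw [← sum_fiberwise (s := univ) (g := (· ^ (Fintype.card K - 1)))]
        refine sum_congr rfl fun z _ => ?_
        rw [← nsmul_eq_mul, ← sum_const]
        refine sum_congr rfl fun x hx => ?_
        rw [← (mem_filter.mp hx).2, traceLift_apply, Units.val_pow_eq_pow_val]
    _ = ∑ ψ : MulChar K R, ∑ z : Lˣ, normLift L ψ z * traceLift L χ (b * z) := by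
        simp_rw [card_units_pow_eq_sum_mulChar, sum_mul]
        exact sum_comm
    _ = ∑ ψ : MulChar K R, (normLift L ψ)⁻¹ b * gaussSum (normLift L ψ) (traceLift L χ) := by
        refine sum_congr rfl fun ψ _ => ?_
        rw [← Units.val_mk0 hb, ← gaussSum_mulShift_eq, ← sum_units_mulChar_mul_addChar]
        rfl
    _ = _ := by
        rw [finsum_eq_sum_of_fintype, mul_sum]
        refine sum_congr rfl fun ψ _ => ?_
        rw [gaussSum_normLift_traceLift ψ hχ, inv_normLift, normLift_apply, mul_comm, mul_assoc]

end Main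

section CanonicalCharacter

/-- `χ` is the canonical additive character `x ↦ exp (2πi Tr(x) / p)` of a finite field of
characteristic `p`. -/
def IsCanonicalAddChar (p : ℕ) {K : Type*} [Field K] [Algebra (ZMod p) K] (χ : AddChar K ℂ) :
    Prop :=
  ∀ x : K, χ x = Complex.exp (2 * Real.pi * Complex.I * ((Algebra.trace (ZMod p) K x).val : ℂ) / p)

variable {p : ℕ} [Fact p.Prime] {K : Type*} [Field K] [Finite K] [Algebra (ZMod p) K]

theorem IsCanonicalAddChar.ne_one {χ : AddChar K ℂ} (hχ : IsCanonicalAddChar p χ) : χ ≠ 1 := by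
  have hp : 1 < p := (Fact.out : p.Prime).one_lt
  have : Fact (1 < p) := ⟨hp⟩
  obtain ⟨a, ha⟩ := Algebra.trace_surjective (ZMod p) K 1
  refine AddChar.ne_one_iff.mpr ⟨a, ?_⟩
  rw [hχ, ha, ZMod.val_one, Nat.cast_one, mul_one]
  exact (Complex.isPrimitiveRoot_exp p (by lia)).ne_one hp

theorem IsCanonicalAddChar.apply_eq_apply_trace {L : Type*} [Field L] [Finite L]
    [Algebra (ZMod p) L] [Algebra K L] {χ₁ : AddChar K ℂ} {χ₂ : AddChar L ℂ}
    (hχ₁ : IsCanonicalAddChar p χ₁) (hχ₂ : IsCanonicalAddChar p χ₂) (y : L) :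
    χ₂ y = χ₁ (Algebra.trace K L y) := by
  have : IsScalarTower (ZMod p) K L := .of_algebraMap_eq' (Subsingleton.elim _ _)
  rw [hχ₁, hχ₂, Algebra.trace_trace]

end CanonicalCharacter

theorem finrank_eq_div_of_card_eq_pow {K L : Type*} [Field K] [Field L] [Algebra K L] [Fintype K]
    [Fintype L] {q f k : ℕ} (hK : Fintype.card K = q ^ f) (hL : Fintype.card L = q ^ k) :
    Module.finrank K L = k / f := by
  have hcard : q ^ k = q ^ (f * Module.finrank K L) := by
    rw [pow_mul, ← hK, ← hL, Module.card_eq_pow_finrank (K := K)]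
  have hone : 1 < q ^ f := hK ▸ Fintype.one_lt_card
  have hf : f ≠ 0 := by
    rintro rfl
    simp at hone
  rw [Nat.pow_right_injective ((Nat.one_lt_pow_iff hf).mp hone) hcard,
    Nat.mul_div_cancel_left _ (Nat.pos_of_ne_zero hf)]

/-- Let `q` be a power of a prime `p` and `k, f` positive integers with
`f ∣ k`.  Let `χ₁` and `χ₂` be the canonical additive characters of `F_{q^f}` and `F_{q^k}`
(hypotheses `hχ₁`, `hχ₂`).  Then for every `b ∈ F_{q^k}ˣ`,
`∑_{x ∈ F_{q^k}ˣ} χ₂(b x^{q^f-1}) = (-1)^{k/f-1} ∑_{ψ₁} G(ψ₁,χ₁)^{k/f} conj(ψ₁)(b^{(q^k-1)/(q^f-1)})`,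
the sum running over all multiplicative characters `ψ₁` of `F_{q^f}`.
Here `b^{(q^k-1)/(q^f-1)}` is the norm of `b` from `Fk` to `Ff` (hypothesis `hnorm`). -/
theorem stmt2 (p e q f k : ℕ) [Fact p.Prime] (he : 0 < e) (hq : q = p ^ e)
    (hf : 0 < f) (hk : 0 < k) (hfk : f ∣ k)
    (Fq Ff Fk : Type) [Field Fq] [Field Ff] [Field Fk]
    [Fintype Fq] [Fintype Ff] [Fintype Fk] [DecidableEq Fk]
    [Algebra Fq Ff] [Algebra Ff Fk]
    [Algebra (ZMod p) Ff] [Algebra (ZMod p) Fk]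
    (hcq : Fintype.card Fq = q) (hcf : Fintype.card Ff = q ^ f)
    (hck : Fintype.card Fk = q ^ k)
    (hnorm : ∀ x : Fk,
      algebraMap Ff Fk (Algebra.norm Ff x) = x ^ ((q ^ k - 1) / (q ^ f - 1)))
    (χ₁ : AddChar Ff ℂ)
    (hχ₁ : ∀ x : Ff, χ₁ x =
      Complex.exp (2 * Real.pi * Complex.I * ((Algebra.trace (ZMod p) Ff x).val : ℂ) / p))
    (χ₂ : AddChar Fk ℂ)
    (hχ₂ : ∀ x : Fk, χ₂ x =
      Complex.exp (2 * Real.pi * Complex.I * ((Algebra.trace (ZMod p) Fk x).val : ℂ) / p))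
    (b : Fk) (hb : b ≠ 0) :
    ∑ x : Fkˣ, χ₂ (b * (x : Fk) ^ (q ^ f - 1))
      = (-1 : ℂ) ^ (k / f - 1) *
        ∑ᶠ ψ₁ : MulChar Ff ℂ,
          gaussSum ψ₁ χ₁ ^ (k / f) * (starRingEnd ℂ) (ψ₁ (Algebra.norm Ff b)) := by
  rw [← finrank_eq_div_of_card_eq_pow hcf hck, ← hcf]
  simpa only [starRingEnd_apply, MulChar.star_apply',
    IsCanonicalAddChar.apply_eq_apply_trace hχ₁ hχ₂]
    using stmt2_general (IsCanonicalAddChar.ne_one hχ₁) hb
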